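/- Let G be a finite unweighted graph without isolated vertices, let λ₁ ≤ ⋯ ≤ λ_n be the min-max eigenvalues of the normalized signless 1-Laplacian Δ₁⁺, and let t = #{k : λ_k = 1} be the multiplicity of the eigenvalue 1. Then (1) α(G) ≤ t ≤ η(G), where α(G) is the independence number and η(G) is the edge covering number of G; and (2) if G is moreover bipartite and connected, then t = α(G). -/

import Mathlib

open Finset

noncomputable section

/-- The set-valued sign function: `{1}` if `t > 0`, `{-1}` if `t < 0`, `[-1,1]` if `t = 0`. -/
def Sgn (t : ℝ) : Set ℝ := if 0 < t then {1} else if t < 0 then {-1} else Set.Icc (-1) 1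

variable {n : ℕ}

/-- The degree `d_i` of vertex `i` (unit edge weights), as a real number. -/
def degR (G : SimpleGraph (Fin n)) [DecidableRel G.Adj] (i : Fin n) : ℝ := (G.degree i : ℝ)

/-- `vol(V) = Σ_i d_i`. -/
def volV (G : SimpleGraph (Fin n)) [DecidableRel G.Adj] : ℝ := ∑ i, degR G i

/-- `I⁺(x) = Σ_{{i,j} ∈ E} |x_i + x_j|`. -/
def IplusU (G : SimpleGraph (Fin n)) [DecidableRel G.Adj] (x : Fin n → ℝ) : ℝ :=
  (∑ i, ∑ j, if G.Adj i j then |x i + x j| else 0) / 2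

/-- `(λ, x)` with `x ≠ 0` is an eigenpair of the signless 1-Laplacian `Δ₁⁺`:
there are `z_{ij} ∈ Sgn(x_i + x_j)` with `z_{ij} = z_{ji}` and `v_i ∈ Sgn(x_i)` such that
`Σ_{j ∼ i} z_{ij} = λ d_i v_i` for all `i`. -/
def IsEigenSignless (G : SimpleGraph (Fin n)) [DecidableRel G.Adj]
    (lam : ℝ) (x : Fin n → ℝ) : Prop :=
  x ≠ 0 ∧ ∃ z : Fin n → Fin n → ℝ,
    (∀ i j, G.Adj i j → z i j ∈ Sgn (x i + x j)) ∧
    (∀ i j, z i j = z j i) ∧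
    ∃ v : Fin n → ℝ, (∀ i, v i ∈ Sgn (x i)) ∧
      ∀ i, (∑ j, if G.Adj i j then z i j else 0) = lam * degR G i * v i

/-- `D` is the vertex set of a connected component of the subgraph of `G` induced by `P`. -/
def IsCompIn (G : SimpleGraph (Fin n)) (P : Set (Fin n)) (D : Set (Fin n)) : Prop :=
  ∃ v ∈ P, D = {u | Relation.ReflTransGen (fun a b => G.Adj a b ∧ a ∈ P ∧ b ∈ P) v u}

/-- The number `S(x)` of nodal domains of `x`: connected components of the support. -/
def nodalCount (G : SimpleGraph (Fin n)) (x : Fin n → ℝ) : ℕ :=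
  Set.ncard {D : Set (Fin n) | IsCompIn G {i | x i ≠ 0} D}

/-- There is a continuous odd nonvanishing map from `A` into `ℝᵐ ∖ {0}`. -/
def HasOddMap (A : Set (Fin n → ℝ)) (m : ℕ) : Prop :=
  ∃ f : (Fin n → ℝ) → (Fin m → ℝ),
    ContinuousOn f A ∧ (∀ x ∈ A, f (-x) = -f x) ∧ ∀ x ∈ A, f x ≠ 0

/-- `γ(A) ≥ k`, where `γ` is the Krasnoselskii genus: the least `m` admitting a
continuous odd nonvanishing map `A → ℝᵐ ∖ {0}` (with `γ(∅) = 0`, `γ(A) = +∞` if none). -/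
def GenusGe (A : Set (Fin n → ℝ)) (k : ℕ) : Prop := ∀ m, HasOddMap A m → k ≤ m

/-- The `k`-th min-max value of a functional `Φ`:
`inf { sup_{x ∈ A} Φ(x) : A ⊆ ℝⁿ∖{0} symmetric compact, γ(A) ≥ k }`. -/
def minimaxVal (Phi : (Fin n → ℝ) → ℝ) (k : ℕ) : ℝ :=
  sInf {r : ℝ | ∃ A : Set (Fin n → ℝ), IsCompact A ∧ (∀ x ∈ A, -x ∈ A) ∧
    (0 : Fin n → ℝ) ∉ A ∧ GenusGe A k ∧ r = sSup (Phi '' A)}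

/-- The Rayleigh quotient `I⁺(x) / Σ_i d_i |x_i|` of the signless 1-Laplacian. -/
def RayleighPlus (G : SimpleGraph (Fin n)) [DecidableRel G.Adj] (x : Fin n → ℝ) : ℝ :=
  IplusU G x / ∑ i, degR G i * |x i|

/-- The `k`-th min-max eigenvalue `c_k` of the (normalized) signless 1-Laplacian `Δ₁⁺`. -/
def ckSignless (G : SimpleGraph (Fin n)) [DecidableRel G.Adj] (k : ℕ) : ℝ :=
  minimaxVal (RayleighPlus G) k

/-- The independence number `α(G)`: maximum size of a set of mutually non-adjacent vertices. -/
def indepNum (G : SimpleGraph (Fin n)) : ℕ :=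
  sSup {k : ℕ | ∃ S : Finset (Fin n), S.card = k ∧ ∀ i ∈ S, ∀ j ∈ S, ¬ G.Adj i j}

/-- The edge covering number `η(G)`: minimum size of a set of edges covering all vertices. -/
def edgeCoverNum (G : SimpleGraph (Fin n)) : ℕ :=
  sInf {k : ℕ | ∃ F : Finset (Sym2 (Fin n)), ↑F ⊆ G.edgeSet ∧
    (∀ v : Fin n, ∃ e ∈ F, v ∈ e) ∧ F.card = k}

/-! ## Part 1: chains of finite multisets with coefficients mod 2 -/

namespace BUlam

/-- Mod 2 chains; a simplex is the multiset of its vertices. -/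
abbrev Ch (E : Type) := Multiset E →₀ ZMod 2

/-- Chains supported on a set of simplices. -/
abbrev Su {E : Type} (S : Set (Multiset E)) : Submodule (ZMod 2) (Ch E) :=
  Finsupp.supported (ZMod 2) (ZMod 2) S

/-- A simplex as a chain. -/
abbrev sg {E : Type} (s : Multiset E) : Ch E := Finsupp.single s 1

open Classical in
/-- Boundary of a simplex. -/
def bdB {E : Type} (s : Multiset E) : Ch E := (s.map fun v => sg (s.erase v)).sum

/-- Boundary operator (augmented). -/
def bd {E : Type} : Ch E →ₗ[ZMod 2] Ch E := Finsupp.linearCombination (ZMod 2) bdB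

/-- Cone operator. -/
def cone {E : Type} (v : E) : Ch E →ₗ[ZMod 2] Ch E :=
  Finsupp.lmapDomain (ZMod 2) (ZMod 2) (fun s => v ::ₘ s)

/-- Push-forward. -/
def mp {E F : Type} (g : E → F) : Ch E →ₗ[ZMod 2] Ch F :=
  Finsupp.lmapDomain (ZMod 2) (ZMod 2) (Multiset.map g)

section
variable {E F : Type}

@[simp] lemma bd_sg (s : Multiset E) : bd (sg s) = bdB s := by simp [bd]
@[simp] lemma cone_sg (v : E) (s : Multiset E) : cone v (sg s) = sg (v ::ₘ s) := by
  simp [cone]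
@[simp] lemma mp_sg (g : E → F) (s : Multiset E) : mp g (sg s) = sg (s.map g) := by
  simp [mp]

lemma ch_two (c : Ch E) : c + c = 0 := by
  ext s; simpa using CharTwo.add_self_eq_zero (c s)

lemma bdB_zero : bdB (0 : Multiset E) = 0 := by simp [bdB]

lemma bdB_cons (v : E) (s : Multiset E) : bdB (v ::ₘ s) = sg s + cone v (bdB s) := by
  classical
  unfold bdB
  rw [Multiset.map_cons, Multiset.sum_cons, Multiset.erase_cons_head, map_multiset_sum,
    Multiset.map_map]
  congr 2
  apply Multiset.map_congr rfl
  intro w hw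
  simp only [Function.comp, cone_sg]
  by_cases h : w = v
  · subst h; rw [Multiset.erase_cons_head, Multiset.cons_erase hw]
  · rw [Multiset.erase_cons_tail]; exact fun h' => h h'.symm

lemma lin_ext {M : Type} [AddCommGroup M] [Module (ZMod 2) M] {L L' : Ch E →ₗ[ZMod 2] M}
    (h : ∀ s, L (sg s) = L' (sg s)) (c : Ch E) : L c = L' c := by
  have : L = L' := Finsupp.lhom_ext' fun s => LinearMap.ext_ring (h s)
  rw [this]

lemma lin_ext_on {M : Type} [AddCommGroup M] [Module (ZMod 2) M] {L L' : Ch E →ₗ[ZMod 2] M}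
    {S : Set (Multiset E)} (h : ∀ s ∈ S, L (sg s) = L' (sg s)) {c : Ch E} (hc : c ∈ Su S) :
    L c = L' c := by
  rw [Su, Finsupp.supported_eq_span_single] at hc
  refine LinearMap.eqOn_span ?_ hc
  rintro _ ⟨s, hs, rfl⟩
  exact h s hs

lemma supp_map {L : Ch E →ₗ[ZMod 2] Ch F} {S : Set (Multiset E)} {T : Set (Multiset F)}
    (h : ∀ s ∈ S, L (sg s) ∈ Su T) {c : Ch E} (hc : c ∈ Su S) : L c ∈ Su T := by
  rw [Su, Finsupp.supported_eq_span_single] at hc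
  have : Submodule.span (ZMod 2) ((fun i => Finsupp.single i (1 : ZMod 2)) '' S) ≤
      (Su T).comap L := by
    rw [Submodule.span_le]
    rintro _ ⟨s, hs, rfl⟩
    exact h s hs
  exact this hc

lemma sg_mem {S : Set (Multiset E)} {s : Multiset E} (h : s ∈ S) : sg s ∈ Su S :=
  Finsupp.single_mem_supported _ _ h

lemma bd_cone (v : E) (c : Ch E) : bd (cone v c) = c + cone v (bd c) := by
  refine lin_ext (L := bd ∘ₗ cone v) (L' := LinearMap.id + cone v ∘ₗ bd) (fun s => ?_) c
  simp [bdB_cons]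

lemma bd_bd (c : Ch E) : bd (bd c) = 0 := by
  refine lin_ext (L := bd ∘ₗ bd) (L' := 0) (fun s => ?_) c
  induction s using Multiset.induction with
  | empty => simp [bdB_zero]
  | cons v s ih =>
    simp only [LinearMap.comp_apply, bd_sg, LinearMap.zero_apply] at ih ⊢
    rw [bdB_cons, map_add, bd_cone, ih, bd_sg, map_zero, add_zero, ch_two]

lemma mp_cone (g : E → F) (v : E) (c : Ch E) : mp g (cone v c) = cone (g v) (mp g c) := by
  refine lin_ext (L := mp g ∘ₗ cone v) (L' := cone (g v) ∘ₗ mp g) (fun s => ?_) c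
  simp

lemma bdB_map (g : E → F) (s : Multiset E) : bdB (s.map g) = mp g (bdB s) := by
  induction s using Multiset.induction with
  | empty => simp [bdB_zero]
  | cons v s ih => rw [Multiset.map_cons, bdB_cons, bdB_cons, ih, map_add, mp_cone, mp_sg]

lemma mp_bd (g : E → F) (c : Ch E) : bd (mp g c) = mp g (bd c) := by
  refine lin_ext (L := bd ∘ₗ mp g) (L' := mp g ∘ₗ bd) (fun s => ?_) c
  simp [bdB_map]

lemma bdB_mem {T : Set (Multiset E)} {s : Multiset E}
    (h : ∀ t ≤ s, Multiset.card t + 1 = Multiset.card s → t ∈ T) :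
    bdB s ∈ Su T := by
  classical
  refine multiset_sum_mem _ ?_
  intro c hc
  obtain ⟨v, hv, rfl⟩ := Multiset.mem_map.1 hc
  exact sg_mem (h _ (Multiset.erase_le _ _) (Multiset.card_erase_add_one hv))

/-- Subdivision operator on simplices with `k` vertices; `b` is the barycenter. -/
def Sd (b : Multiset E → E) : ℕ → (Ch E →ₗ[ZMod 2] Ch E)
  | 0 => LinearMap.id
  | k + 1 => Finsupp.linearCombination (ZMod 2) (fun s => cone (b s) (Sd b k (bdB s)))

lemma Sd_succ_sg (b : Multiset E → E) (k : ℕ) (s : Multiset E) :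
    Sd b (k + 1) (sg s) = cone (b s) (Sd b k (bdB s)) := by simp [Sd]

/-- simplices with `k` vertices -/
def cardS (E : Type) (k : ℕ) : Set (Multiset E) := {s | Multiset.card s = k}

lemma bd_card {k : ℕ} {c : Ch E} (hc : c ∈ Su (cardS E (k + 1))) : bd c ∈ Su (cardS E k) := by
  classical
  refine supp_map (fun s hs => ?_) hc
  rw [bd_sg]
  refine bdB_mem fun t _ ht => ?_
  have hs' : Multiset.card s = k + 1 := hs
  change Multiset.card t = k
  omega

lemma bd_Sd (b : Multiset E → E) (k : ℕ) : ∀ {c : Ch E}, c ∈ Su (cardS E (k + 1)) →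
    bd (Sd b (k + 1) c) = Sd b k (bd c) := by
  induction k with
  | zero =>
    intro c hc
    refine lin_ext_on (L := bd ∘ₗ Sd b 1) (L' := Sd b 0 ∘ₗ bd) (fun s hs => ?_) hc
    obtain ⟨v, rfl⟩ := Multiset.card_eq_one.1 hs
    simp only [LinearMap.comp_apply, Sd_succ_sg, bd_cone, bd_sg]
    rw [← Multiset.cons_zero, bdB_cons, bdB_zero]
    simp [Sd, bdB_zero]
  | succ k ih =>
    intro c hc
    refine lin_ext_on (L := bd ∘ₗ Sd b (k + 2)) (L' := Sd b (k + 1) ∘ₗ bd) (fun s hs => ?_) hc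
    simp only [LinearMap.comp_apply]
    rw [Sd_succ_sg, bd_cone, ← bd_sg, ih (bd_card (sg_mem hs)), bd_bd, map_zero, map_zero, add_zero]

lemma Sd_mp (b : Multiset E → E) (g : E → E) (hb : ∀ s, b (s.map g) = g (b s)) (k : ℕ) :
    ∀ c, Sd b k (mp g c) = mp g (Sd b k c) := by
  induction k with
  | zero => intro c; simp [Sd]
  | succ k ih =>
    refine lin_ext (L := Sd b (k + 1) ∘ₗ mp g) (L' := mp g ∘ₗ Sd b (k + 1)) (fun s => ?_)
    simp only [LinearMap.comp_apply, mp_sg]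
    rw [Sd_succ_sg, Sd_succ_sg, bdB_map, ih, hb, mp_cone]

end

/-! ### Fan's lemma on labels -/

/-- alternating count; labels are natural numbers, `2i` and `2i+1` being opposite -/
def fanF : ZMod 2 → List ℕ → ZMod 2
  | _, [] => 1
  | x, b :: l => (x + (b : ZMod 2)) * fanF (b : ZMod 2) l

/-- Opposite label. -/
def flip (b : ℕ) : ℕ := if b % 2 = 0 then b + 1 else b - 1

lemma flip_cast (b : ℕ) : ((flip b : ℕ) : ZMod 2) = 1 + (b : ZMod 2) := by
  unfold flip
  split_ifs with h
  · push_cast; ring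
  · have h1 : b = (b - 1) + 1 := by omega
    conv_rhs => rw [h1]
    push_cast
    rw [add_comm, add_assoc]
    have : (1 : ZMod 2) + 1 = 0 := by decide
    rw [this, add_zero]

lemma fanF_flip (l : List ℕ) (x : ZMod 2) : fanF x (l.map flip) = fanF (1 + x) l := by
  induction l generalizing x with
  | nil => rfl
  | cons b l ih =>
    simp only [List.map_cons, fanF, ih, flip_cast]
    have h2 : ∀ y : ZMod 2, 1 + (1 + y) = y := by decide
    rw [h2]; ring

lemma fanF_add (b : ℕ) (l : List ℕ) :
    fanF 0 (b :: l) + fanF 1 (b :: l) = fanF b l := by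
  simp only [fanF]
  have h2 : ∀ y z : ZMod 2, (0 + y) * z + (1 + y) * z = z := by decide
  apply h2

/-- Extension of `fanF x` to chains of labels. -/
def fanL (x : ZMod 2) : Ch ℕ →ₗ[ZMod 2] ZMod 2 :=
  Finsupp.linearCombination (ZMod 2) (fun s => fanF x (Multiset.sort s (· ≤ ·)))

lemma fanL_sg (x : ZMod 2) (s : Multiset ℕ) : fanL x (sg s) = fanF x (s.sort (· ≤ ·)) := by
  simp [fanL]

lemma fanL_cone (x : ZMod 2) (b : ℕ) {c : Ch ℕ} (hc : c ∈ Su {s | ∀ a ∈ s, b ≤ a}) :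
    fanL x (cone b c) = (x + b) * fanL b c := by
  refine lin_ext_on (L := fanL x ∘ₗ cone b) (L' := (x + (b : ZMod 2)) • fanL b)
    (fun s hs => ?_) hc
  simp only [LinearMap.comp_apply, cone_sg, fanL_sg, LinearMap.smul_apply, smul_eq_mul]
  rw [Multiset.sort_cons b s (· ≤ ·) hs]
  rfl

lemma fanL_bd_list (l : List ℕ) : ∀ (b : ℕ) (x : ZMod 2), (b :: l).Pairwise (· ≤ ·) →
    fanL x (bdB ((b :: l : List ℕ) : Multiset ℕ)) = fanF b l := by
  induction l with
  | nil =>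
    intro b x _
    have : (([b] : List ℕ) : Multiset ℕ) = b ::ₘ 0 := rfl
    rw [this, bdB_cons, bdB_zero, map_zero, add_zero, fanL_sg]
    simp [fanF]
  | cons a l ih =>
    intro b x h
    obtain ⟨h1, h2⟩ := List.pairwise_cons.1 h
    have e : ((b :: a :: l : List ℕ) : Multiset ℕ) = b ::ₘ ((a :: l : List ℕ) : Multiset ℕ) := rfl
    have hsort : ((a :: l : List ℕ) : Multiset ℕ).sort (· ≤ ·) = a :: l := by
      rw [Multiset.coe_sort]
      exact List.mergeSort_of_pairwise (by simpa using h2)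
    rw [e, bdB_cons, map_add, fanL_cone, ih a _ h2, fanL_sg, hsort]
    · simp only [fanF]
      have h2 : ∀ x a b z : ZMod 2, (x + a) * z + (x + b) * z = (b + a) * z := by decide
      apply h2
    · refine bdB_mem fun t ht _ => ?_
      intro w hw
      have := Multiset.mem_of_le ht hw
      exact h1 w (by simpa using this)

/-- label simplices without complementary pairs, nonempty -/
def noComp : Set (Multiset ℕ) := {s | s ≠ 0 ∧ ∀ a ∈ s, ∀ b ∈ s, a / 2 = b / 2 → a = b}

lemma fanL_bd {c : Ch ℕ} (hc : c ∈ Su noComp) : fanL 0 (bd c) = fanL 0 c + fanL 1 c := by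
  refine lin_ext_on (L := fanL 0 ∘ₗ bd) (L' := fanL 0 + fanL 1) (fun s hs => ?_) hc
  simp only [LinearMap.comp_apply, LinearMap.add_apply, bd_sg, fanL_sg]
  have hp := Multiset.pairwise_sort s (· ≤ ·)
  have he := Multiset.sort_eq s (· ≤ ·)
  generalize s.sort (· ≤ ·) = l at hp he
  subst he
  cases l with
  | nil => exact absurd rfl hs.1
  | cons b l => rw [fanL_bd_list l b 0 hp, fanF_add]

lemma fanL_flip {c : Ch ℕ} (hc : c ∈ Su noComp) : fanL 0 (mp flip c) = fanL 1 c := by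
  refine lin_ext_on (L := fanL 0 ∘ₗ mp flip) (L' := fanL 1) (fun s hs => ?_) hc
  simp only [LinearMap.comp_apply, mp_sg, fanL_sg]
  rw [← Multiset.map_sort (r := (· ≤ ·)), fanF_flip, add_zero]
  intro a ha b hb
  have := hs.2 a ha b hb
  unfold flip
  split_ifs <;> omega

lemma fanF_ne (l : List ℕ) : ∀ x, (∀ a ∈ l, ∀ b ∈ l, a / 2 = b / 2 → a = b) →
    l.Pairwise (· ≤ ·) → fanF x l ≠ 0 → (l.map (· / 2)).Pairwise (· < ·) := by
  induction l with
  | nil => intros; simp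
  | cons b l ih =>
    intro x h1 h2 h3
    obtain ⟨h4, h5⟩ := List.pairwise_cons.1 h2
    simp only [fanF] at h3
    have h6 := ih _ (fun a ha c hc => h1 a (by simp [ha]) c (by simp [hc])) h5
      (right_ne_zero_of_mul h3)
    rw [List.map_cons, List.pairwise_cons]
    refine ⟨?_, h6⟩
    cases l with
    | nil => simp
    | cons a l =>
      have hab : b / 2 < a / 2 := by
        have hle : b ≤ a := h4 a (by simp)
        rcases (Nat.div_le_div_right (c := 2) hle).lt_or_eq with h | h
        · exact h
        · exfalso
          have : b = a := h1 b (by simp) a (by simp) h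
          subst this
          apply right_ne_zero_of_mul h3
          simp only [fanF]
          have h2 : ∀ x z : ZMod 2, (x + x) * z = 0 := by decide
          apply h2
      intro c hc
      rw [List.map_cons, List.pairwise_cons] at h6
      rw [List.map_cons, List.mem_cons] at hc
      rcases hc with rfl | hc
      · exact hab
      · exact hab.trans (h6.1 c hc)

lemma fanL_zero (m k : ℕ) (hmk : m < k) (x : ZMod 2) {c : Ch ℕ}
    (hc : c ∈ Su {s | s ∈ noComp ∧ Multiset.card s = k ∧ ∀ a ∈ s, a < 2 * m}) :
    fanL x c = 0 := by
  refine lin_ext_on (L := fanL x) (L' := 0) (fun s hs => ?_) hc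
  obtain ⟨h1, h2, h3⟩ := hs
  rw [fanL_sg, LinearMap.zero_apply]
  by_contra hne
  have := fanF_ne _ x (by simpa using h1.2) (Multiset.pairwise_sort s (· ≤ ·)) hne
  have hnd : ((s.sort (· ≤ ·)).map (· / 2)).Nodup := this.imp fun h => h.ne
  have hsub : ((s.sort (· ≤ ·)).map (· / 2)) ⊆ List.range m := by
    intro i hi
    obtain ⟨a, ha, rfl⟩ := List.mem_map.1 hi
    have := h3 a (by simpa using ha)
    simp; omega
  have := (hnd.subperm hsub).length_le
  simp [h2] at this
  omega

/-! ## Part 2: small chains on the `ℓ¹` sphere and the Borsuk-Ulam theorem -/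

section
variable {p : ℕ}

/-- Barycenter. -/
def bary (s : Multiset (Fin p → ℝ)) : Fin p → ℝ := ((Multiset.card s : ℝ)⁻¹) • s.sum

lemma bary_neg (s : Multiset (Fin p → ℝ)) : bary (s.map (fun v => -v)) = -bary s := by
  unfold bary
  rw [Multiset.card_map, Multiset.sum_map_neg, smul_neg, Multiset.map_id']

lemma bary_dist (s : Multiset (Fin p → ℝ)) (d : ℝ) (k : ℕ) (hk : Multiset.card s = k + 1)
    (hd : ∀ u ∈ s, ∀ v ∈ s, dist u v ≤ d) (v : Fin p → ℝ) (hv : v ∈ s) :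
    dist v (bary s) ≤ (k : ℝ) / (k + 1) * d := by
  classical
  have hk0 : ((k : ℝ) + 1) ≠ 0 := by positivity
  obtain ⟨t, rfl⟩ := Multiset.exists_cons_of_mem hv
  have hct : Multiset.card t = k := by simpa using hk
  have hsum : ∀ t : Multiset (Fin p → ℝ), (∀ u ∈ t, dist u v ≤ d) →
      ‖t.sum - (Multiset.card t : ℝ) • v‖ ≤ (Multiset.card t : ℝ) * d := by
    intro t
    induction t using Multiset.induction with
    | empty => intro _; simp
    | cons a t ih =>
      intro h
      have h1 := ih fun u hu => h u (by simp [hu])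
      have h2 := h a (by simp)
      rw [dist_eq_norm] at h2
      have e : (a ::ₘ t).sum - (Multiset.card (a ::ₘ t) : ℝ) • v =
          (a - v) + (t.sum - (Multiset.card t : ℝ) • v) := by
        simp only [Multiset.sum_cons, Multiset.card_cons]
        push_cast
        module
      rw [e]
      refine (norm_add_le _ _).trans ?_
      simp only [Multiset.card_cons]
      push_cast
      linarith
  have h3 := hsum t fun u hu => hd u (by simp [hu]) v (by simp)
  rw [hct] at h3
  have e : bary (v ::ₘ t) - v = ((k : ℝ) + 1)⁻¹ • (t.sum - (k : ℝ) • v) := by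
    unfold bary
    simp only [Multiset.sum_cons, Multiset.card_cons, hct]
    push_cast
    have : v = ((k : ℝ) + 1)⁻¹ • (((k : ℝ) + 1) • v) := by
      rw [smul_smul, inv_mul_cancel₀ hk0, one_smul]
    conv_lhs => rw [sub_eq_add_neg]; right; rw [this]
    module
  rw [dist_comm, dist_eq_norm, e, norm_smul, norm_inv, Real.norm_of_nonneg (by positivity)]
  calc ((k : ℝ) + 1)⁻¹ * ‖t.sum - (k : ℝ) • v‖ ≤ ((k : ℝ) + 1)⁻¹ * (k * d) := by gcongr
    _ = _ := by field_simp

lemma bary_mem (s : Multiset (Fin p → ℝ)) (K : Set (Fin p → ℝ)) (hK : Convex ℝ K)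
    (hs : s ≠ 0) (h : ∀ v ∈ s, v ∈ K) : bary s ∈ K := by
  have hpos : 0 < Multiset.card s := Multiset.card_pos.2 hs
  obtain ⟨l, rfl⟩ := Quot.exists_rep s
  change 0 < l.length at hpos
  have h' : ∀ v ∈ l, v ∈ K := h
  have e : bary (Quot.mk _ l) = ∑ i : Fin l.length, ((l.length : ℝ)⁻¹) • l.get i := by
    rw [← Finset.smul_sum]
    unfold bary
    change (l.length : ℝ)⁻¹ • l.sum = _
    congr 1
    conv_lhs => rw [← List.ofFn_get l, List.sum_ofFn]
  rw [e]
  refine hK.sum_mem (fun _ _ => by positivity) ?_ fun i _ => h' _ (List.get_mem _ _)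
  have : (l.length : ℝ) ≠ 0 := by positivity
  simp [this]

lemma Sd_good (c d : ℝ) (hd0 : 0 ≤ d) (N : ℕ) (hc : ∀ k : ℕ, k < N → (k : ℝ) / (k + 1) ≤ c) (k : ℕ) :
    k ≤ N → ∀ s : Multiset (Fin p → ℝ), Multiset.card s = k →
    (∀ u ∈ s, ∀ v ∈ s, dist u v ≤ d) →
    Sd bary k (sg s) ∈ Su {t | Multiset.card t = k ∧
      (∀ K : Set (Fin p → ℝ), Convex ℝ K → (∀ v ∈ s, v ∈ K) → ∀ v ∈ t, v ∈ K) ∧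
      ∀ u ∈ t, ∀ v ∈ t, dist u v ≤ c * d} := by
  induction k with
  | zero =>
    intro _ s hs _
    have : s = 0 := Multiset.card_eq_zero.1 hs
    subst this
    refine sg_mem ?_
    simp
  | succ k ih =>
    intro hk s hs hd
    rw [Sd_succ_sg]
    have h1 : Sd bary k (bdB s) ∈ Su {t | Multiset.card t = k ∧
      (∀ K : Set (Fin p → ℝ), Convex ℝ K → (∀ v ∈ s, v ∈ K) → ∀ v ∈ t, v ∈ K) ∧
      ∀ u ∈ t, ∀ v ∈ t, dist u v ≤ c * d} := by
      refine supp_map (S := {t | t ≤ s ∧ Multiset.card t = k}) ?_ (bdB_mem ?_)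
      · rintro t ⟨ht, htk⟩
        have := ih (by omega) t htk
          (fun u hu v hv => hd u (Multiset.mem_of_le ht hu) v (Multiset.mem_of_le ht hv))
        refine Finsupp.supported_mono ?_ this
        rintro w ⟨w1, w2, w3⟩
        exact ⟨w1, fun K hK hsK => w2 K hK fun v hv => hsK v (Multiset.mem_of_le ht hv), w3⟩
      · intro t ht htc
        exact ⟨ht, by omega⟩
    refine supp_map ?_ h1
    rintro t ⟨t1, t2, t3⟩
    rw [cone_sg]
    refine sg_mem ?_
    have hs0 : s ≠ 0 := by
      rintro rfl; simp at hs
    have hball : ∀ v ∈ t, dist v (bary s) ≤ c * d := by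
      intro v hv
      refine t2 (Metric.closedBall (bary s) (c * d)) (convex_closedBall _ _) ?_ v hv
      intro w hw
      refine (bary_dist s d k hs hd w hw).trans ?_
      exact mul_le_mul_of_nonneg_right (hc k (by omega)) hd0
    have hcd : 0 ≤ c * d := by
      refine mul_nonneg (le_trans ?_ (hc k (by omega))) hd0
      positivity
    refine ⟨by simp [t1], ?_, ?_⟩
    · intro K hK hsK v hv
      rcases Multiset.mem_cons.1 hv with rfl | hv
      · exact bary_mem s K hK hs0 hsK
      · exact t2 K hK hsK v hv
    · intro u hu v hv
      rcases Multiset.mem_cons.1 hu with rfl | hu <;> rcases Multiset.mem_cons.1 hv with rfl | hv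
      · simpa using hcd
      · rw [dist_comm]; exact hball v hv
      · exact hball u hu
      · exact t3 u hu v hv

/-- Faces of the `ℓ¹` unit sphere. -/
def face (ε : Fin p → ℝ) : Set (Fin p → ℝ) := {v | (∀ i, 0 ≤ ε i * v i) ∧ ∑ i, ε i * v i = 1}

lemma face_convex (ε : Fin p → ℝ) : Convex ℝ (face ε) := by
  intro x hx y hy a b ha hb hab
  constructor
  · intro i
    have := mul_nonneg ha (hx.1 i)
    have := mul_nonneg hb (hy.1 i)
    simp only [Pi.add_apply, Pi.smul_apply, smul_eq_mul]
    nlinarith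
  · have e : ∑ i, ε i * (a • x + b • y) i = a * ∑ i, ε i * x i + b * ∑ i, ε i * y i := by
      rw [Finset.mul_sum, Finset.mul_sum, ← Finset.sum_add_distrib]
      refine Finset.sum_congr rfl fun i _ => ?_
      simp only [Pi.add_apply, Pi.smul_apply, smul_eq_mul]; ring
    rw [e, hx.2, hy.2]; linarith

/-- The `ℓ¹` unit sphere. -/
def sph (p : ℕ) : Set (Fin p → ℝ) := {v | ∑ i, |v i| = 1}

lemma face_sph (ε : Fin p → ℝ) (hε : ∀ i, ε i = 1 ∨ ε i = -1) : face ε ⊆ sph p := by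
  intro v hv
  have : ∀ i, |v i| = ε i * v i := by
    intro i
    have h := hv.1 i
    rw [← abs_of_nonneg h, abs_mul]
    rcases hε i with h | h <;> simp [h]
  change ∑ i, |v i| = 1
  rw [← hv.2]
  exact Finset.sum_congr rfl fun i _ => this i

/-- simplices with `k+1` vertices lying in one face, of diameter at most `d` -/
def good (p k : ℕ) (d : ℝ) : Set (Multiset (Fin p → ℝ)) :=
  {s | Multiset.card s = k + 1 ∧
    (∃ ε : Fin p → ℝ, (∀ i, ε i = 1 ∨ ε i = -1) ∧ ∀ v ∈ s, v ∈ face ε) ∧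
    ∀ u ∈ s, ∀ v ∈ s, dist u v ≤ d}

/-- Standard basis vectors, indexed by natural numbers. -/
def ee (p : ℕ) (k : ℕ) : Fin p → ℝ := fun i => if i.1 = k then 1 else 0

/-- Coarse hemisphere chains. -/
def hh (p : ℕ) : ℕ → Ch (Fin p → ℝ)
  | 0 => sg {ee p 0}
  | k + 1 => cone (ee p (k + 1)) (hh p k + mp (fun v => -v) (hh p k))

lemma mp_neg_neg (c : Ch (Fin p → ℝ)) : mp (fun v => -v) (mp (fun v => -v) c) = c := by
  refine lin_ext (L := mp (fun v => -v) ∘ₗ mp (fun v => -v)) (L' := LinearMap.id) (fun s => ?_) c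
  simp [Multiset.map_map]

lemma bd_hh_zero : bd (hh p 0) = sg 0 := by
  rw [hh, bd_sg, ← Multiset.cons_zero, bdB_cons, bdB_zero, map_zero, add_zero]

lemma bd_hh (k : ℕ) : bd (hh p (k + 1)) = hh p k + mp (fun v => -v) (hh p k) := by
  have key : bd (hh p k + mp (fun v => -v) (hh p k)) = 0 := by
    induction k with
    | zero =>
      rw [map_add, mp_bd, bd_hh_zero, mp_sg]
      exact ch_two _
    | succ k ih =>
      have : bd (hh p (k + 1)) = hh p k + mp (fun v => -v) (hh p k) := by
        rw [hh, bd_cone, ih, map_zero, add_zero]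
      rw [map_add, mp_bd, this, map_add, mp_neg_neg, add_comm (mp _ _), ch_two]
  rw [hh, bd_cone, key, map_zero, add_zero]

lemma hh_supp (k : ℕ) : hh p k ∈ Su {s | Multiset.card s = k + 1 ∧
    ∃ ε : ℕ → ℝ, (∀ i, ε i = 1 ∨ ε i = -1) ∧ ∀ v ∈ s, ∃ i ≤ k, v = ε i • ee p i} := by
  induction k with
  | zero =>
    refine sg_mem ⟨by simp, fun _ => 1, by simp, ?_⟩
    intro v hv
    exact ⟨0, le_rfl, by simpa using hv⟩
  | succ k ih =>
    refine supp_map (L := cone (ee p (k + 1))) ?_ (Submodule.add_mem _ ih (supp_map ?_ ih))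
    · rintro s ⟨hs, ε, hε, h⟩
      rw [cone_sg]
      refine sg_mem ⟨by simp [hs], fun i => if i = k + 1 then 1 else ε i, ?_, ?_⟩
      · intro i; dsimp only; split_ifs
        · simp
        · exact hε i
      · intro v hv
        rcases Multiset.mem_cons.1 hv with rfl | hv
        · exact ⟨k + 1, le_rfl, by simp⟩
        · obtain ⟨i, hi, rfl⟩ := h v hv
          refine ⟨i, by omega, ?_⟩
          have : i ≠ k + 1 := by omega
          simp [this]
    · rintro s ⟨hs, ε, hε, h⟩
      rw [mp_sg]
      refine sg_mem ⟨by simp [hs], fun i => -ε i, ?_, ?_⟩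
      · intro i; rcases hε i with h | h <;> simp [h]
      · intro v hv
        obtain ⟨w, hw, rfl⟩ := Multiset.mem_map.1 hv
        obtain ⟨i, hi, rfl⟩ := h w hw
        exact ⟨i, hi, by simp⟩

lemma hh_good (k : ℕ) (hk : k < p) : hh p k ∈ Su (good p k 2) := by
  refine Finsupp.supported_mono ?_ (hh_supp k)
  rintro s ⟨hs, ε, hε, h⟩
  have habs : ∀ i, |ε i| = 1 := fun i => by rcases hε i with h | h <;> simp [h]
  have hsq : ∀ i, ε i * ε i = 1 := fun i => by rcases hε i with h | h <;> simp [h]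
  refine ⟨hs, ⟨fun i => ε i.1, fun i => hε i, ?_⟩, ?_⟩
  · intro v hv
    obtain ⟨i, hi, rfl⟩ := h v hv
    have e : ∀ j : Fin p, ε j.1 * (ε i • ee p i) j = if j = ⟨i, by omega⟩ then 1 else 0 := by
      intro j
      simp only [Pi.smul_apply, ee, smul_eq_mul, Fin.ext_iff]
      split_ifs with hj
      · rw [hj, mul_one, hsq]
      · simp
    constructor
    · intro j; rw [e]; split_ifs <;> norm_num
    · rw [Finset.sum_congr rfl fun j _ => e j]; simp
  · have hn : ∀ v ∈ s, ‖v‖ ≤ 1 := by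
      intro v hv
      obtain ⟨i, hi, rfl⟩ := h v hv
      rw [pi_norm_le_iff_of_nonneg zero_le_one]
      intro j
      simp only [Pi.smul_apply, ee, smul_eq_mul, norm_mul, Real.norm_eq_abs, habs]
      split_ifs <;> simp
    intro u hu v hv
    rw [dist_eq_norm]
    have := norm_sub_le u v
    linarith [hn u hu, hn v hv]

lemma fine (c : ℝ) (hc0 : 0 ≤ c) (hc : ∀ k : ℕ, k < p → (k : ℝ) / (k + 1) ≤ c) (N : ℕ) :
    ∃ H : ℕ → Ch (Fin p → ℝ), (∀ k, k < p → H k ∈ Su (good p k (2 * c ^ N))) ∧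
      bd (H 0) = sg 0 ∧
      ∀ k, k + 1 < p → bd (H (k + 1)) = H k + mp (fun v => -v) (H k) := by
  by_cases hp : p = 0
  · refine ⟨hh p, fun k hk => by omega, bd_hh_zero, fun k hk => by omega⟩
  induction N with
  | zero => exact ⟨hh p, fun k hk => by simpa using hh_good k hk, bd_hh_zero, fun k _ => bd_hh k⟩
  | succ N ih =>
    obtain ⟨H, h1, h2, h3⟩ := ih
    have hcard : ∀ k, k < p → H k ∈ Su (cardS (Fin p → ℝ) (k + 1)) := fun k hk =>
      Finsupp.supported_mono (fun s hs => hs.1) (h1 k hk)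
    refine ⟨fun k => Sd bary (k + 1) (H k), ?_, ?_, ?_⟩
    · intro k hk
      refine supp_map ?_ (h1 k hk)
      rintro s ⟨s1, ⟨ε, hε, s2⟩, s3⟩
      have := Sd_good c (2 * c ^ N) (by positivity) p hc (k + 1) (by omega) s s1 s3
      refine Finsupp.supported_mono ?_ this
      rintro t ⟨t1, t2, t3⟩
      refine ⟨t1, ⟨ε, hε, t2 _ (face_convex ε) s2⟩, ?_⟩
      intro u hu v hv
      refine (t3 u hu v hv).trans (le_of_eq ?_)
      ring
    · dsimp only
      rw [bd_Sd bary 0 (hcard 0 (by omega)), h2]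
      rfl
    · intro k hk
      dsimp only
      rw [bd_Sd bary (k + 1) (hcard (k + 1) hk), h3 k hk, map_add, Sd_mp bary _ bary_neg]

lemma sph_compact (p : ℕ) : IsCompact (sph p) := by
  refine Metric.isCompact_of_isClosed_isBounded ?_ ?_
  · exact isClosed_eq (by fun_prop) continuous_const
  · refine (Metric.isBounded_closedBall (x := (0 : Fin p → ℝ)) (r := 1)).subset ?_
    intro v hv
    rw [mem_closedBall_zero_iff, pi_norm_le_iff_of_nonneg zero_le_one]
    intro i
    rw [Real.norm_eq_abs, ← (show ∑ i, |v i| = 1 from hv)]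
    exact Finset.single_le_sum (f := fun i => |v i|) (fun _ _ => abs_nonneg _) (Finset.mem_univ i)

lemma sph_neg {x : Fin p → ℝ} (hx : x ∈ sph p) : -x ∈ sph p := by
  change ∑ i, |(-x) i| = 1
  have h : ∑ i, |x i| = 1 := hx
  simpa using h

/-- **Borsuk-Ulam**: no odd nonvanishing continuous map from the sphere of `ℝᵖ` into `ℝᵐ`, `m < p`. -/
theorem borsuk_ulam {m : ℕ} (f : (Fin p → ℝ) → (Fin m → ℝ)) (hf : ContinuousOn f (sph p))
    (hodd : ∀ x ∈ sph p, f (-x) = -f x) (hne : ∀ x ∈ sph p, f x ≠ 0) : p ≤ m := by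
  by_contra hmp
  push Not at hmp
  have hp : 0 < p := by omega
  have hSne : (sph p).Nonempty := by
    refine ⟨ee p 0, ?_⟩
    change ∑ i, |ee p 0 i| = 1
    rw [Finset.sum_eq_single (⟨0, hp⟩ : Fin p)]
    · simp [ee]
    · intro b _ hb
      have : b.1 ≠ 0 := fun h => hb (Fin.ext h)
      simp [ee, this]
    · simp
  obtain ⟨x0, hx0, hmin⟩ := (sph_compact p).exists_isMinOn hSne hf.norm
  set δ₀ := ‖f x0‖ with hδ₀
  have hδpos : 0 < δ₀ := norm_pos_iff.2 (hne x0 hx0)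
  have hge : ∀ x ∈ sph p, δ₀ ≤ ‖f x‖ := fun x hx => hmin hx
  have huc := (sph_compact p).uniformContinuousOn_of_continuous hf
  obtain ⟨δ, hδ, huc⟩ := Metric.uniformContinuousOn_iff.1 huc δ₀ hδpos
  -- labels
  let g : (Fin p → ℝ) → ℕ → ℝ := fun x j => if h : j < m then f x ⟨j, h⟩ else 0
  let jj : (Fin p → ℝ) → ℕ := fun x => sInf {j | δ₀ ≤ |g x j|}
  let lab : (Fin p → ℝ) → ℕ := fun x => 2 * jj x + if 0 < g x (jj x) then 0 else 1
  have hgneg : ∀ x ∈ sph p, ∀ j, g (-x) j = -g x j := by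
    intro x hx j
    simp only [g, hodd x hx]
    split_ifs <;> simp
  have hjneg : ∀ x ∈ sph p, jj (-x) = jj x := by
    intro x hx
    simp only [jj, hgneg x hx, abs_neg]
  have hjmem : ∀ x ∈ sph p, δ₀ ≤ |g x (jj x)| := by
    intro x hx
    have : {j | δ₀ ≤ |g x j|}.Nonempty := by
      by_contra hcon
      rw [Set.not_nonempty_iff_eq_empty] at hcon
      have : ‖f x‖ < δ₀ := by
        rw [pi_norm_lt_iff hδpos]
        intro i
        by_contra hi
        push Not at hi
        have : i.1 ∈ {j | δ₀ ≤ |g x j|} := by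
          simpa [g] using hi
        rw [hcon] at this
        exact this
      exact absurd (hge x hx) (not_le.2 this)
    exact Nat.sInf_mem this
  have hjlt : ∀ x ∈ sph p, jj x < m := by
    intro x hx
    by_contra h
    have h1 := hjmem x hx
    have : g x (jj x) = 0 := by simp only [g]; rw [dif_neg h]
    rw [this, abs_zero] at h1
    linarith
  have hlabneg : ∀ x ∈ sph p, lab (-x) = flip (lab x) := by
    intro x hx
    have h1 := hjmem x hx
    simp only [lab, hjneg x hx, hgneg x hx]
    have hne0 : g x (jj x) ≠ 0 := by
      intro h; rw [h, abs_zero] at h1; linarith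
    unfold flip
    rcases lt_or_gt_of_ne hne0 with h | h
    · have h' : ¬ 0 < g x (jj x) := by linarith
      have h'' : 0 < - g x (jj x) := by linarith
      simp only [h', h'', if_true, if_false]
      rw [if_neg (by omega)]; try omega
    · have h'' : ¬ 0 < - g x (jj x) := by linarith
      simp only [h, h'', if_true, if_false]
      rw [if_pos (by omega)]; try omega
  have hlablt : ∀ x ∈ sph p, lab x < 2 * m := by
    intro x hx
    have := hjlt x hx
    simp only [lab]
    split_ifs <;> omega
  have hlabcomp : ∀ x ∈ sph p, ∀ y ∈ sph p, dist x y < δ → lab x / 2 = lab y / 2 →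
      lab x = lab y := by
    intro x hx y hy hxy h
    have hj : jj x = jj y := by
      simp only [lab] at h
      split_ifs at h <;> omega
    have h1 := hjmem x hx
    have h2 := hjmem y hy
    have h3 := huc x hx y hy hxy
    have h4 : |g x (jj x) - g y (jj x)| < δ₀ := by
      have hlt := hjlt x hx
      simp only [g, dif_pos hlt]
      have := dist_le_pi_dist (f x) (f y) ⟨jj x, hlt⟩
      rw [Real.dist_eq] at this
      linarith
    rw [← hj] at h2
    simp only [lab, ← hj]
    have : (0 < g x (jj x)) ↔ (0 < g y (jj x)) := by
      rw [abs_lt] at h4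
      constructor
      · intro h5
        by_contra h6
        rw [abs_of_pos h5] at h1
        rw [abs_of_nonpos (by linarith)] at h2
        linarith
      · intro h5
        by_contra h6
        rw [abs_of_pos h5] at h2
        rw [abs_of_nonpos (by linarith)] at h1
        linarith
    simp only [this]
  -- fine chains
  let c : ℝ := (p : ℝ) / (p + 1)
  have hc0 : 0 ≤ c := by positivity
  have hc1 : c < 1 := by
    simp only [c]; rw [div_lt_one (by positivity)]; linarith
  have hck : ∀ k : ℕ, k < p → (k : ℝ) / (k + 1) ≤ c := by
    intro k hk
    have : (k : ℝ) ≤ p := by exact_mod_cast hk.le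
    simp only [c]
    rw [div_le_div_iff₀ (by positivity) (by positivity)]
    nlinarith
  obtain ⟨N, hN⟩ := exists_pow_lt_of_lt_one (show 0 < δ / 2 by positivity) hc1
  obtain ⟨H, h1, h2, h3⟩ := fine c hc0 hck N
  have hsph : ∀ k d, ∀ s ∈ good p k d, ∀ v ∈ s, v ∈ sph p := by
    rintro k d s ⟨_, ⟨ε, hε, h⟩, _⟩ v hv
    exact face_sph ε hε (h v hv)
  have hgood : ∀ k, k < p → mp lab (H k) ∈ Su {s | s ∈ noComp ∧ Multiset.card s = k + 1 ∧
      ∀ a ∈ s, a < 2 * m} := by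
    intro k hk
    refine supp_map ?_ (h1 k hk)
    intro s hs
    have hs' := hsph _ _ s hs
    obtain ⟨s1, -, s3⟩ := hs
    rw [mp_sg]
    refine sg_mem ⟨⟨?_, ?_⟩, by simp [s1], ?_⟩
    · intro h0
      have := congrArg Multiset.card h0
      simp [s1] at this
    · intro a ha b hb
      obtain ⟨u, hu, rfl⟩ := Multiset.mem_map.1 ha
      obtain ⟨v, hv, rfl⟩ := Multiset.mem_map.1 hb
      refine hlabcomp u (hs' u hu) v (hs' v hv) ?_
      have := s3 u hu v hv
      linarith
    · intro a ha
      obtain ⟨u, hu, rfl⟩ := Multiset.mem_map.1 ha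
      exact hlablt u (hs' u hu)
  have hnc : ∀ k, k < p → mp lab (H k) ∈ Su noComp := fun k hk =>
    Finsupp.supported_mono (fun s hs => hs.1) (hgood k hk)
  have hflip : ∀ k, k < p → mp lab (mp (fun v => -v) (H k)) = mp flip (mp lab (H k)) := by
    intro k hk
    refine lin_ext_on (L := mp lab ∘ₗ mp (fun v => -v)) (L' := mp flip ∘ₗ mp lab) ?_ (h1 k hk)
    intro s hs
    simp only [LinearMap.comp_apply, mp_sg, Multiset.map_map]
    congr 1
    refine Multiset.map_congr rfl fun v hv => ?_
    exact hlabneg v (hsph _ _ s hs v hv)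
  have hmain : ∀ k, k < p → fanL 0 (mp lab (H k)) + fanL 1 (mp lab (H k)) = 1 := by
    intro k
    induction k with
    | zero =>
      intro hk
      rw [← fanL_bd (hnc 0 hk), mp_bd, h2, mp_sg, fanL_sg]
      simp [fanF]
    | succ k ih =>
      intro hk
      rw [← fanL_bd (hnc _ hk), mp_bd, h3 k hk, map_add, map_add, hflip k (by omega),
        fanL_flip (hnc k (by omega))]
      exact ih (by omega)
  have hlast := hmain (p - 1) (by omega)
  have hg := hgood (p - 1) (by omega)
  rw [fanL_zero m _ (by omega) 0 hg, fanL_zero m _ (by omega) 1 hg] at hlast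
  simp at hlast

end

end BUlam

/-! ## Part 3: the min-max eigenvalues -/

section Aux

lemma genus_image {k : ℕ} (L : (Fin k → ℝ) → (Fin n → ℝ)) (hL : Continuous L)
    (hodd : ∀ x, L (-x) = -L x) {j : ℕ} (hj : j ≤ k) : GenusGe (L '' BUlam.sph k) j := by
  rintro m ⟨f, hf, ho, hn⟩
  refine hj.trans (BUlam.borsuk_ulam (fun x => f (L x)) ?_ ?_ ?_)
  · exact hf.comp hL.continuousOn (Set.mapsTo_image _ _)
  · intro x hx
    rw [hodd, ho _ (Set.mem_image_of_mem _ hx)]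
  · intro x hx
    exact hn _ (Set.mem_image_of_mem _ hx)

variable (G : SimpleGraph (Fin n)) [DecidableRel G.Adj]

lemma den_half (x : Fin n → ℝ) :
    ∑ i, ∑ j, (if G.Adj i j then |x i| else 0) = ∑ i, degR G i * |x i| := by
  refine Finset.sum_congr rfl fun i _ => ?_
  rw [← Finset.sum_filter, Finset.sum_const, nsmul_eq_mul]
  congr 1
  unfold degR
  rw [← SimpleGraph.card_neighborFinset_eq_degree, SimpleGraph.neighborFinset_eq_filter]

lemma den_eq (x : Fin n → ℝ) :
    ∑ i, degR G i * |x i| = (∑ i, ∑ j, if G.Adj i j then |x i| + |x j| else 0) / 2 := by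
  have h1 := den_half G x
  have h2 : ∑ i, ∑ j, (if G.Adj i j then |x j| else 0) = ∑ i, degR G i * |x i| := by
    rw [Finset.sum_comm, ← h1]
    simp only [G.adj_comm]
  have h3 : ∑ i, ∑ j, (if G.Adj i j then |x i| + |x j| else 0) =
      ∑ i, ∑ j, (if G.Adj i j then |x i| else 0) + ∑ i, ∑ j, (if G.Adj i j then |x j| else 0) := by
    simp only [← Finset.sum_add_distrib]
    refine Finset.sum_congr rfl fun i _ => Finset.sum_congr rfl fun j _ => ?_
    split_ifs <;> simp
  rw [h3, h1, h2]; ring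

lemma term_le (x : Fin n → ℝ) (i j : Fin n) : (if G.Adj i j then |x i + x j| else 0) ≤
    (if G.Adj i j then |x i| + |x j| else 0) := by
  split_ifs
  · exact abs_add_le _ _
  · exact le_rfl

lemma Iplus_le (x : Fin n → ℝ) : IplusU G x ≤ ∑ i, degR G i * |x i| := by
  rw [den_eq, IplusU]
  have := Finset.sum_le_sum fun i (_ : i ∈ Finset.univ) =>
    Finset.sum_le_sum fun j (_ : j ∈ Finset.univ) => term_le G x i j
  linarith

lemma Iplus_lt (x : Fin n → ℝ) (a b : Fin n) (hab : G.Adj a b) (hx : x a * x b < 0) :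
    IplusU G x < ∑ i, degR G i * |x i| := by
  rw [den_eq, IplusU]
  have hlt : |x a + x b| < |x a| + |x b| := by
    rcases mul_neg_iff.1 hx with ⟨h1, h2⟩ | ⟨h1, h2⟩
    · rw [abs_of_pos h1, abs_of_neg h2, abs_lt]; constructor <;> linarith
    · rw [abs_of_neg h1, abs_of_pos h2, abs_lt]; constructor <;> linarith
  have : (∑ i, ∑ j, if G.Adj i j then |x i + x j| else 0) <
      ∑ i, ∑ j, if G.Adj i j then |x i| + |x j| else 0 := by
    refine Finset.sum_lt_sum (fun i _ => Finset.sum_le_sum fun j _ => term_le G x i j)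
      ⟨a, Finset.mem_univ _, ?_⟩
    refine Finset.sum_lt_sum (fun j _ => term_le G x a j) ⟨b, Finset.mem_univ _, ?_⟩
    simpa [hab] using hlt
  linarith

lemma Iplus_nonneg (x : Fin n → ℝ) : 0 ≤ IplusU G x := by
  unfold IplusU
  refine div_nonneg (Finset.sum_nonneg fun i _ => Finset.sum_nonneg fun j _ => ?_) (by norm_num)
  split_ifs <;> positivity

lemma den_nonneg (x : Fin n → ℝ) : 0 ≤ ∑ i, degR G i * |x i| :=
  (Iplus_nonneg G x).trans (Iplus_le G x)

lemma den_pos (hiso : ∀ i, 0 < G.degree i) (x : Fin n → ℝ) (hx : x ≠ 0) :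
    0 < ∑ i, degR G i * |x i| := by
  obtain ⟨i, hi⟩ := Function.ne_iff.1 hx
  have hi' : 0 < |x i| := abs_pos.2 hi
  have hd : ∀ i, 0 < degR G i := fun i => by unfold degR; exact_mod_cast hiso i
  refine Finset.sum_pos' (fun j _ => mul_nonneg (hd j).le (abs_nonneg _))
    ⟨i, Finset.mem_univ _, mul_pos (hd i) hi'⟩

lemma ray_nonneg (x : Fin n → ℝ) : 0 ≤ RayleighPlus G x :=
  div_nonneg (Iplus_nonneg G x) (den_nonneg G x)

lemma ray_le_one (x : Fin n → ℝ) : RayleighPlus G x ≤ 1 :=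
  div_le_one_of_le₀ (Iplus_le G x) (den_nonneg G x)

lemma ray_continuousOn (hiso : ∀ i, 0 < G.degree i) (A : Set (Fin n → ℝ))
    (hA : (0 : Fin n → ℝ) ∉ A) : ContinuousOn (RayleighPlus G) A := by
  have h1 : Continuous (IplusU G) := by
    unfold IplusU
    refine Continuous.div_const (continuous_finsetSum _ fun i _ =>
      continuous_finsetSum _ fun j _ => ?_) _
    split_ifs <;> fun_prop
  have h2 : Continuous (fun x : Fin n → ℝ => ∑ i, degR G i * |x i|) := by fun_prop
  refine h1.continuousOn.div h2.continuousOn fun x hx => ?_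
  exact ne_of_gt (den_pos G hiso x fun h => hA (h ▸ hx))

/-- the set whose infimum is `ckSignless G k` -/
def mmSet (k : ℕ) : Set ℝ := {r : ℝ | ∃ A : Set (Fin n → ℝ), IsCompact A ∧ (∀ x ∈ A, -x ∈ A) ∧
    (0 : Fin n → ℝ) ∉ A ∧ GenusGe A k ∧ r = sSup (RayleighPlus G '' A)}

lemma mmSet_bdd (k : ℕ) : BddBelow (mmSet G k) := by
  refine ⟨0, ?_⟩
  rintro r ⟨A, -, -, -, -, rfl⟩
  refine Real.sSup_nonneg ?_
  rintro _ ⟨x, -, rfl⟩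
  exact ray_nonneg G x

/-- Images of the sphere under injective odd continuous maps are admissible. -/
lemma mmSet_mem {k : ℕ} (L : (Fin k → ℝ) → (Fin n → ℝ)) (hL : Continuous L)
    (hodd : ∀ x, L (-x) = -L x) (hne : ∀ x ∈ BUlam.sph k, L x ≠ 0) {j : ℕ} (hj : j ≤ k) :
    sSup (RayleighPlus G '' (L '' BUlam.sph k)) ∈ mmSet G j := by
  refine ⟨L '' BUlam.sph k, (BUlam.sph_compact k).image hL, ?_, ?_, genus_image L hL hodd hj, rfl⟩
  · rintro _ ⟨x, hx, rfl⟩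
    exact ⟨-x, BUlam.sph_neg hx, hodd x⟩
  · rintro ⟨x, hx, h⟩
    exact hne x hx h

lemma sph_ne_zero {k : ℕ} {x : Fin k → ℝ} (hx : x ∈ BUlam.sph k) : x ≠ 0 := by
  rintro rfl
  have : ∑ i : Fin k, |(0 : Fin k → ℝ) i| = 1 := hx
  simp at this

lemma ck_eq_one (S : Finset (Fin n)) (hS : ∀ i ∈ S, ∀ j ∈ S, ¬ G.Adj i j)
    (hiso : ∀ i, 0 < G.degree i) (k : ℕ) (hk : k ≤ n) (hkS : n - S.card < k) :
    ckSignless G k = 1 := by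
  have hmem := mmSet_mem G (k := n) (fun x => x) continuous_id (fun _ => rfl)
    (fun x hx => sph_ne_zero hx) hk
  change sInf (mmSet G k) = 1
  apply le_antisymm
  · refine (csInf_le (mmSet_bdd G k) hmem).trans ?_
    refine Real.sSup_le ?_ zero_le_one
    rintro _ ⟨x, -, rfl⟩
    exact ray_le_one G x
  · refine le_csInf ⟨_, hmem⟩ ?_
    rintro r ⟨A, hA, hsym, h0, hgen, rfl⟩
    -- restrict to coordinates outside `S`
    have hcard : Fintype.card {i // i ∉ S} = n - S.card := by
      rw [Fintype.card_subtype_compl]; simp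
    let e : {i // i ∉ S} ≃ Fin (n - S.card) := Fintype.equivFinOfCardEq hcard
    have hex : ∃ x ∈ A, ∀ i, i ∉ S → x i = 0 := by
      by_contra hcon
      push Not at hcon
      have := hgen (n - S.card) ⟨fun x a => x (e.symm a).1, ?_, ?_, ?_⟩
      · omega
      · exact Continuous.continuousOn (by fun_prop)
      · intro x _; rfl
      · intro x hx h
        obtain ⟨i, hi, hxi⟩ := hcon x hx
        apply hxi
        have := congrFun h (e ⟨i, hi⟩)
        simpa using this
    obtain ⟨x, hx, hxS⟩ := hex
    have hx0 : x ≠ 0 := fun h => h0 (h ▸ hx)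
    have h1 : RayleighPlus G x = 1 := by
      unfold RayleighPlus
      rw [div_eq_one_iff_eq (den_pos G hiso x hx0).ne', den_eq, IplusU]
      congr 1
      refine Finset.sum_congr rfl fun i _ => Finset.sum_congr rfl fun j _ => ?_
      split_ifs with hij
      · by_cases hi : i ∈ S
        · have hj : j ∉ S := fun hj => hS i hi j hj hij
          simp [hxS j hj]
        · simp [hxS i hi]
      · rfl
    rw [← h1]
    refine le_csSup ⟨1, ?_⟩ (Set.mem_image_of_mem _ hx)
    rintro _ ⟨y, -, rfl⟩
    exact ray_le_one G y

lemma ck_lt_one (hiso : ∀ i, 0 < G.degree i) (m : ℕ) (u v : Fin m → Fin n)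
    (hu : Function.Injective u) (hv : Function.Injective v) (huv : ∀ s t, u s ≠ v t)
    (hadj : ∀ t, G.Adj (u t) (v t)) (k : ℕ) (hk0 : 0 < k) (hk : k ≤ m) :
    ckSignless G k < 1 := by
  let L : (Fin m → ℝ) → (Fin n → ℝ) := fun a i =>
    ∑ t, a t * ((if i = u t then 1 else 0) - (if i = v t then 1 else 0))
  have hLu : ∀ a t, L a (u t) = a t := by
    intro a t
    simp only [L]
    rw [Finset.sum_eq_single t]
    · simp [huv]
    · intro s _ hs
      have : u t ≠ u s := fun h => hs (hu h).symm
      simp [huv, this]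
    · simp
  have hLv : ∀ a t, L a (v t) = -a t := by
    intro a t
    simp only [L]
    rw [Finset.sum_eq_single t]
    · simp [fun s t => (huv s t).symm]
    · intro s _ hs
      have : v t ≠ v s := fun h => hs (hv h).symm
      simp [fun s t => (huv s t).symm, this]
    · simp
  have hL : Continuous L := by
    refine continuous_pi fun i => continuous_finsetSum _ fun t _ => ?_
    fun_prop
  have hodd : ∀ x, L (-x) = -L x := by
    intro x; ext i
    simp [L, Finset.sum_neg_distrib]
  have hex : ∀ x ∈ BUlam.sph m, ∃ t, x t ≠ 0 := fun x hx =>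
    Function.ne_iff.1 (sph_ne_zero hx)
  have hne : ∀ x ∈ BUlam.sph m, L x ≠ 0 := by
    intro x hx h
    obtain ⟨t, ht⟩ := hex x hx
    apply ht
    rw [← hLu x t, h]; rfl
  have hmem := mmSet_mem G L hL hodd hne hk
  refine lt_of_le_of_lt (csInf_le (mmSet_bdd G k) hmem) ?_
  have hcomp : IsCompact (RayleighPlus G '' (L '' BUlam.sph m)) := by
    refine ((BUlam.sph_compact m).image hL).image_of_continuousOn (ray_continuousOn G hiso _ ?_)
    rintro ⟨x, hx, h⟩
    exact hne x hx h
  have hnem : (BUlam.sph m).Nonempty := by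
    refine ⟨Pi.single ⟨0, by omega⟩ 1, ?_⟩
    change ∑ i, |(Pi.single (⟨0, by omega⟩ : Fin m) (1 : ℝ) : Fin m → ℝ) i| = 1
    rw [Finset.sum_eq_single ⟨0, by omega⟩]
    · simp
    · intro b _ hb; simp [hb]
    · simp
  obtain ⟨_, ⟨x, hx, rfl⟩, he⟩ := hcomp.sSup_mem ((hnem.image L).image _)
  rw [← he]
  obtain ⟨t, ht⟩ := hex x hx
  unfold RayleighPlus
  rw [div_lt_one (den_pos G hiso _ (hne x hx))]
  refine Iplus_lt G _ (u t) (v t) (hadj t) ?_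
  rw [hLu, hLv]
  have := mul_self_pos.2 ht
  linarith

lemma ncard_ge (c : ℕ) : Set.ncard {k : Fin n | c ≤ k.1} = n - c := by
  rw [Set.ncard_eq_toFinset_card']
  have : (Set.toFinset {k : Fin n | c ≤ k.1}).map Fin.valEmbedding = Finset.Ico c n := by
    ext j
    simp only [Finset.mem_map, Set.mem_toFinset, Set.mem_ofPred_eq, Fin.valEmbedding_apply,
      Finset.mem_Ico]
    constructor
    · rintro ⟨a, ha, rfl⟩; exact ⟨ha, a.2⟩
    · rintro ⟨h1, h2⟩; exact ⟨⟨j, h2⟩, h1, rfl⟩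
  rw [← Finset.card_map Fin.valEmbedding, this, Nat.card_Ico]

lemma t_ge (S : Finset (Fin n)) (hS : ∀ i ∈ S, ∀ j ∈ S, ¬ G.Adj i j)
    (hiso : ∀ i, 0 < G.degree i) :
    S.card ≤ Set.ncard {k : Fin n | ckSignless G (k.1 + 1) = 1} := by
  have hSn : S.card ≤ n := by simpa using S.card_le_univ
  have h := ncard_ge (n := n) (n - S.card)
  have h2 : S.card = Set.ncard {k : Fin n | n - S.card ≤ k.1} := by omega
  rw [h2]
  refine Set.ncard_le_ncard ?_ (Set.toFinite _)
  intro k hk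
  have hk' : n - S.card ≤ k.1 := hk
  exact ck_eq_one G S hS hiso _ (by omega) (by omega)

lemma t_le (hiso : ∀ i, 0 < G.degree i) {ι : Type} [Fintype ι] (u v : ι → Fin n)
    (hu : Function.Injective u) (hv : Function.Injective v) (huv : ∀ s t, u s ≠ v t)
    (hadj : ∀ t, G.Adj (u t) (v t)) :
    Set.ncard {k : Fin n | ckSignless G (k.1 + 1) = 1} ≤ n - Fintype.card ι := by
  rw [← ncard_ge]
  refine Set.ncard_le_ncard ?_ (Set.toFinite _)
  intro k hk
  by_contra hlt
  have hlt' : k.1 < Fintype.card ι := not_le.1 hlt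
  let e := (Fintype.equivFin ι).symm
  have := ck_lt_one G hiso (Fintype.card ι) (u ∘ e) (v ∘ e) (hu.comp e.injective)
    (hv.comp e.injective) (fun s t => huv _ _) (fun t => hadj _) (k.1 + 1) (by omega) (by omega)
  exact absurd hk this.ne

/-- The independence number is attained. -/
lemma indep_attained (G : SimpleGraph (Fin n)) :
    (∃ S : Finset (Fin n), S.card = indepNum G ∧ ∀ i ∈ S, ∀ j ∈ S, ¬ G.Adj i j) ∧
    ∀ S : Finset (Fin n), (∀ i ∈ S, ∀ j ∈ S, ¬ G.Adj i j) → S.card ≤ indepNum G := by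
  have hb : BddAbove {k : ℕ | ∃ S : Finset (Fin n), S.card = k ∧ ∀ i ∈ S, ∀ j ∈ S, ¬ G.Adj i j} := by
    refine ⟨n, ?_⟩
    rintro k ⟨S, rfl, -⟩
    simpa using S.card_le_univ
  have hne : {k : ℕ | ∃ S : Finset (Fin n), S.card = k ∧
      ∀ i ∈ S, ∀ j ∈ S, ¬ G.Adj i j}.Nonempty := ⟨0, ∅, by simp⟩
  refine ⟨Nat.sSup_mem hne hb, fun S hS => le_csSup hb ⟨S, rfl, hS⟩⟩

lemma t_le_cover (hiso : ∀ i, 0 < G.degree i) (F : Finset (Sym2 (Fin n)))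
    (hF : (F : Set (Sym2 (Fin n))) ⊆ G.edgeSet) (hcov : ∀ v : Fin n, ∃ e ∈ F, v ∈ e) :
    Set.ncard {k : Fin n | ckSignless G (k.1 + 1) = 1} ≤ F.card := by
  classical
  let P : Finset (Sym2 (Fin n)) → Prop := fun M => ∀ e ∈ M, ∀ e' ∈ M, ∀ v, v ∈ e → v ∈ e' → e = e'
  obtain ⟨M, hM, hmax⟩ := Finset.exists_max_image (F.powerset.filter P) Finset.card
    ⟨∅, by simp [P]⟩
  obtain ⟨hMF, hMP⟩ := Finset.mem_filter.1 hM
  rw [Finset.mem_powerset] at hMF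
  let u : {e // e ∈ M} → Fin n := fun e => (Quot.out e.1).1
  let v : {e // e ∈ M} → Fin n := fun e => (Quot.out e.1).2
  have he : ∀ e : {e // e ∈ M}, e.1 = s(u e, v e) := fun e => (Quot.out_eq e.1).symm
  have hue : ∀ e : {e // e ∈ M}, u e ∈ e.1 := fun e => by rw [he e]; simp
  have hve : ∀ e : {e // e ∈ M}, v e ∈ e.1 := fun e => by rw [he e]; simp
  have hadj : ∀ e : {e // e ∈ M}, G.Adj (u e) (v e) := by
    intro e
    have := hF (hMF e.2)
    rw [he e] at this
    exact this
  have hu : Function.Injective u := fun e e' h =>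
    Subtype.ext (hMP _ e.2 _ e'.2 (u e) (hue e) (h ▸ hue e'))
  have hv : Function.Injective v := fun e e' h =>
    Subtype.ext (hMP _ e.2 _ e'.2 (v e) (hve e) (h ▸ hve e'))
  have huv : ∀ e e', u e ≠ v e' := by
    intro e e' h
    have : e = e' := Subtype.ext (hMP _ e.2 _ e'.2 (u e) (hue e) (h ▸ hve e'))
    subst this
    exact (hadj e).ne h
  have h1 := t_le G hiso u v hu hv huv hadj
  rw [Fintype.card_coe] at h1
  -- counting
  let U : Finset (Fin n) := Finset.univ.filter fun w => ∀ e ∈ M, w ∉ e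
  choose φ hφF hφ using hcov
  have hφM : ∀ w ∈ U, φ w ∉ M := fun w hw hm => (Finset.mem_filter.1 hw).2 _ hm (hφ w)
  have hUcard : U.card ≤ (F \ M).card := by
    refine Finset.card_le_card_of_injOn φ (fun w hw => by
      simp [hφF w, hφM w hw]) ?_
    intro w hw w' hw' hww
    by_contra hne
    have hw1 : w' ∈ φ w := by rw [hww]; exact hφ w'
    have hfe : φ w = s(w, w') := ((Sym2.mem_and_mem_iff hne).1 ⟨hφ w, hw1⟩)
    have hins : insert (φ w) M ∈ F.powerset.filter P := by
      refine Finset.mem_filter.2 ⟨Finset.mem_powerset.2 (Finset.insert_subset (hφF w) hMF), ?_⟩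
      have key : ∀ e ∈ M, ∀ z, z ∈ φ w → z ∉ e := by
        intro e he z hz
        rw [hfe, Sym2.mem_iff] at hz
        rcases hz with rfl | rfl
        · exact (Finset.mem_filter.1 hw).2 e he
        · exact (Finset.mem_filter.1 hw').2 e he
      intro e he e' he' z hz hz'
      rcases Finset.mem_insert.1 he with rfl | he <;> rcases Finset.mem_insert.1 he' with h | he'
      · exact h.symm
      · exact absurd hz' (key e' he' z hz)
      · subst h; exact absurd hz (key e he z hz')
      · exact hMP e he e' he' z hz hz'
    have := hmax _ hins
    rw [Finset.card_insert_of_notMem (hφM w hw)] at this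
    omega
  have hCcard : (Finset.univ \ U).card ≤ M.card + M.card := by
    have hsub : Finset.univ \ U ⊆ Finset.univ.image u ∪ Finset.univ.image v := by
      intro w hw
      have : ∃ e ∈ M, w ∈ e := by
        by_contra hcon
        push Not at hcon
        exact (Finset.mem_sdiff.1 hw).2 (Finset.mem_filter.2 ⟨Finset.mem_univ _, hcon⟩)
      obtain ⟨e, heM, hwe⟩ := this
      have h2 := he ⟨e, heM⟩
      dsimp only at h2
      rw [h2, Sym2.mem_iff] at hwe
      rcases hwe with rfl | rfl
      · exact Finset.mem_union_left _ (Finset.mem_image_of_mem _ (Finset.mem_univ _))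
      · exact Finset.mem_union_right _ (Finset.mem_image_of_mem _ (Finset.mem_univ _))
    refine (Finset.card_le_card hsub).trans ((Finset.card_union_le _ _).trans ?_)
    refine add_le_add ?_ ?_ <;>
    · refine Finset.card_image_le.trans ?_
      simp
  rw [Finset.card_sdiff_of_subset hMF] at hUcard
  rw [Finset.card_sdiff_of_subset (Finset.subset_univ _), Finset.card_univ, Fintype.card_fin]
    at hCcard
  have := Finset.card_le_card hMF
  omega

lemma t_le_cover_num (hiso : ∀ i, 0 < G.degree i) :
    Set.ncard {k : Fin n | ckSignless G (k.1 + 1) = 1} ≤ edgeCoverNum G := by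
  classical
  have hne : {k : ℕ | ∃ F : Finset (Sym2 (Fin n)), ↑F ⊆ G.edgeSet ∧
      (∀ v : Fin n, ∃ e ∈ F, v ∈ e) ∧ F.card = k}.Nonempty := by
    refine ⟨_, G.edgeFinset, by simp, ?_, rfl⟩
    intro v
    obtain ⟨w, hw⟩ := (G.degree_pos_iff_exists_adj v).1 (hiso v)
    exact ⟨s(v, w), by simpa using hw, by simp⟩
  obtain ⟨F, h1, h2, h3⟩ := Nat.sInf_mem hne
  have := t_le_cover G hiso F h1 h2
  unfold edgeCoverNum
  omega

lemma t_le_bip (hiso : ∀ i, 0 < G.degree i) (C : G.Coloring (Fin 2)) :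
    Set.ncard {k : Fin n | ckSignless G (k.1 + 1) = 1} ≤ indepNum G := by
  classical
  obtain ⟨⟨S, hSc, hS⟩, hmax⟩ := indep_attained G
  let t : {x // x ∉ S} → Finset (Fin n) := fun x => S.filter (G.Adj x.1)
  have hall : ∀ W : Finset {x // x ∉ S}, W.card ≤ (W.biUnion t).card := by
    intro W
    have key : ∀ b : Fin 2, (W.filter fun x => C x.1 = b).card ≤
        ((W.biUnion t).filter fun y => C y ≠ b).card := by
      intro b
      set Wb := W.filter fun x => C x.1 = b with hWb
      have hsub : Wb.biUnion t ⊆ (W.biUnion t).filter fun y => C y ≠ b := by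
        intro y hy
        obtain ⟨x, hx, hxy⟩ := Finset.mem_biUnion.1 hy
        obtain ⟨hxW, hxb⟩ := Finset.mem_filter.1 hx
        refine Finset.mem_filter.2 ⟨Finset.mem_biUnion.2 ⟨x, hxW, hxy⟩, ?_⟩
        rw [← hxb]
        exact (C.valid (Finset.mem_filter.1 hxy).2).symm
      refine le_trans ?_ (Finset.card_le_card hsub)
      have hNS : Wb.biUnion t ⊆ S := by
        intro y hy
        obtain ⟨x, hx, hxy⟩ := Finset.mem_biUnion.1 hy
        exact (Finset.mem_filter.1 hxy).1
      have hind := hmax ((S \ Wb.biUnion t) ∪ Wb.image Subtype.val) ?_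
      · rw [Finset.card_union_of_disjoint, Finset.card_image_of_injective _ Subtype.val_injective,
          Finset.card_sdiff_of_subset hNS, ← hSc] at hind
        · have := Finset.card_le_card hNS
          omega
        · rw [Finset.disjoint_left]
          intro y hy hy'
          obtain ⟨x, -, rfl⟩ := Finset.mem_image.1 hy'
          exact x.2 (Finset.mem_sdiff.1 hy).1
      · have hcross : ∀ i ∈ S \ Wb.biUnion t, ∀ j ∈ Wb.image Subtype.val, ¬ G.Adj j i := by
          intro i hi j hj hadj
          obtain ⟨x, hx, rfl⟩ := Finset.mem_image.1 hj
          obtain ⟨hi1, hi2⟩ := Finset.mem_sdiff.1 hi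
          exact hi2 (Finset.mem_biUnion.2 ⟨x, hx, Finset.mem_filter.2 ⟨hi1, hadj⟩⟩)
        intro i hi j hj
        rcases Finset.mem_union.1 hi with hi | hi <;> rcases Finset.mem_union.1 hj with hj | hj
        · exact hS i (Finset.mem_sdiff.1 hi).1 j (Finset.mem_sdiff.1 hj).1
        · exact fun h => hcross i hi j hj h.symm
        · exact hcross j hj i hi
        · obtain ⟨x, hx, rfl⟩ := Finset.mem_image.1 hi
          obtain ⟨y, hy, rfl⟩ := Finset.mem_image.1 hj
          intro h
          exact C.valid h ((Finset.mem_filter.1 hx).2.trans (Finset.mem_filter.1 hy).2.symm)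
    have k0 := key 0
    have k1 := key 1
    have e1 := Finset.card_filter_add_card_filter_not (s := W) (fun x => C x.1 = 0)
    have e2 := Finset.card_filter_add_card_filter_not (s := W.biUnion t) (fun y => C y ≠ 0)
    have hf : ∀ a : Fin 2, ¬ a = 0 ↔ a = 1 := by decide
    have hg : ∀ a : Fin 2, ¬ a ≠ 0 ↔ a ≠ 1 := by decide
    simp only [hf] at e1
    simp only [hg] at e2
    omega
  obtain ⟨f, hfinj, hft⟩ := (Finset.all_card_le_biUnion_card_iff_exists_injective t).1 hall
  have h := t_le G hiso (ι := {x // x ∉ S}) (fun x => x.1) f Subtype.val_injective hfinj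
    (fun s x hs => s.2 (hs ▸ (Finset.mem_filter.1 (hft x)).1))
    (fun x => (Finset.mem_filter.1 (hft x)).2)
  rw [Fintype.card_subtype_compl] at h
  have hSn : S.card ≤ n := by simpa using S.card_le_univ
  simp at h
  omega

end Aux

theorem stmt11 (G : SimpleGraph (Fin n)) [DecidableRel G.Adj]
    (hiso : ∀ i, 0 < G.degree i) :
    (indepNum G ≤ Set.ncard {k : Fin n | ckSignless G (k.1 + 1) = 1} ∧
      Set.ncard {k : Fin n | ckSignless G (k.1 + 1) = 1} ≤ edgeCoverNum G) ∧
    (G.Connected → G.Colorable 2 →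
      Set.ncard {k : Fin n | ckSignless G (k.1 + 1) = 1} = indepNum G) := by
  have hge : indepNum G ≤ Set.ncard {k : Fin n | ckSignless G (k.1 + 1) = 1} := by
    obtain ⟨S, hS, hind⟩ := (indep_attained G).1
    rw [← hS]
    exact t_ge G S hind hiso
  refine ⟨⟨hge, t_le_cover_num G hiso⟩, fun _ hC => le_antisymm ?_ hge⟩
  obtain ⟨C⟩ := hC
  exact t_le_bip G hiso C
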